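/- Fix a rewrite order ⊴. If G ⊆ R^m is a rewrite basis up to a term u, then G is a signature Gröbner basis up to u. -/

import Mathlib

namespace SigGB

noncomputable section

/-- Power-products in `n` indeterminates, written additively as exponent vectors
(so the power-product `1` is `0`, and multiplication of power-products is `+`). -/
abbrev PP (n : ℕ) : Type := Fin n →₀ ℕ

/-- Terms: a power-product together with a component index (`t·e_i ↝ (t, i)`). -/
abbrev Term (n m : ℕ) : Type := PP n × Fin m

/-- Multiplication of a term by a power-product: `t ⊗ (s·e_i) = (t·s)·e_i`. -/
def mulTerm {n m : ℕ} (t : PP n) (u : Term n m) : Term n m := (t + u.1, u.2)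

/-- Divisibility of terms: `u ∣ v` iff `v = t ⊗ u` for some power-product `t`. -/
def termDvd {n m : ℕ} (u v : Term n m) : Prop := ∃ t : PP n, v = mulTerm t u

/-- Componentwise lcm of power-products. -/
noncomputable def lcmPP {n : ℕ} (s t : PP n) : PP n := Finsupp.zipWith max (max_self 0) s t

/-- Strict part of a relation. -/
def strict {α : Type*} (r : α → α → Prop) (x y : α) : Prop := r x y ∧ x ≠ y

/-- `ple` is an admissible order on power-products and `tle` is a compatible
linear order on terms. -/
structure OrdersOK {n m : ℕ} (ple : PP n → PP n → Prop)
    (tle : Term n m → Term n m → Prop) : Prop where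
  ple_refl : ∀ t, ple t t
  ple_trans : ∀ s t u, ple s t → ple t u → ple s u
  ple_antisymm : ∀ s t, ple s t → ple t s → s = t
  ple_total : ∀ s t, ple s t ∨ ple t s
  ple_one_le : ∀ t, ple 0 t
  ple_mul : ∀ (t s₁ s₂ : PP n), ple s₁ s₂ → ple (t + s₁) (t + s₂)
  tle_refl : ∀ u, tle u u
  tle_trans : ∀ u v w, tle u v → tle v w → tle u w
  tle_antisymm : ∀ u v, tle u v → tle v u → u = v
  tle_total : ∀ u v, tle u v ∨ tle v u
  tle_mul : ∀ (t : PP n) (u v : Term n m), tle u v → tle (mulTerm t u) (mulTerm t v)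
  tle_compat : ∀ (s t : PP n) (i j : Fin m), ple s t → i ≤ j → tle (s, i) (t, j)

variable {K : Type*} [Field K] {n m : ℕ} [NeZero m]

variable (f : Fin m → MvPolynomial (Fin n) K)
variable (ple : PP n → PP n → Prop)
variable (tle : Term n m → Term n m → Prop)

/-- The module homomorphism `R^m → R` determined by `e_i ↦ f i`, i.e. `a ↦ ‾a`. -/
def bar (a : Fin m → MvPolynomial (Fin n) K) : MvPolynomial (Fin n) K := ∑ i, a i * f i

/-- Multiplication of a module element by a coefficient `c` and a power-product `t`. -/
noncomputable def monomMul (c : K) (t : PP n) (a : Fin m → MvPolynomial (Fin n) K) :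
    Fin m → MvPolynomial (Fin n) K :=
  fun i => MvPolynomial.monomial t c * a i

/-- The coefficient of a term in a module element. -/
def coeffM (a : Fin m → MvPolynomial (Fin n) K) (u : Term n m) : K :=
  MvPolynomial.coeff u.1 (a u.2)

open Classical in
/-- Leading power-product of a polynomial w.r.t. `ple`
(junk value `0`, i.e. the power-product `1`, for the zero polynomial). -/
noncomputable def lp (p : MvPolynomial (Fin n) K) : PP n :=
  if h : ∃ t, MvPolynomial.coeff t p ≠ 0 ∧ ∀ s, MvPolynomial.coeff s p ≠ 0 → ple s t
  then h.choose else 0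

/-- Leading coefficient of a polynomial w.r.t. `ple`. -/
noncomputable def lc (p : MvPolynomial (Fin n) K) : K := MvPolynomial.coeff (lp ple p) p

open Classical in
/-- Signature of a module element: its `tle`-largest term with nonzero coefficient
(junk value for `0`). -/
noncomputable def sig (a : Fin m → MvPolynomial (Fin n) K) : Term n m :=
  if h : ∃ u, coeffM a u ≠ 0 ∧ ∀ v, coeffM a v ≠ 0 → tle v u
  then h.choose else ((0 : PP n), (0 : Fin m))

/-- Leading coefficient of a module element. -/
noncomputable def lcM (a : Fin m → MvPolynomial (Fin n) K) : K := coeffM a (sig tle a)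

/-- One-step s-reduction of `a` to `b` modulo `G`, witnessed by `g ∈ G` and the
power-product `t`. -/
def RedStepWith (G : Set (Fin m → MvPolynomial (Fin n) K))
    (a b g : Fin m → MvPolynomial (Fin n) K) (t : PP n) : Prop :=
  g ∈ G ∧ bar f g ≠ 0 ∧
    MvPolynomial.coeff (t + lp ple (bar f g)) (bar f a) ≠ 0 ∧
    b = a - monomMul (MvPolynomial.coeff (t + lp ple (bar f g)) (bar f a) / lc ple (bar f g)) t g ∧
    tle (mulTerm t (sig tle g)) (sig tle a)

/-- The step witnessed by `g` and `t` is regular: `t ⊗ 𝔰(g) ≺_t 𝔰(a)`. -/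
def RegularWith (a g : Fin m → MvPolynomial (Fin n) K) (t : PP n) : Prop :=
  strict tle (mulTerm t (sig tle g)) (sig tle a)

/-- The step witnessed by `g` and `t` is top: `t·lp(‾g) = lp(‾a)`. -/
def TopWith (a g : Fin m → MvPolynomial (Fin n) K) (t : PP n) : Prop :=
  t + lp ple (bar f g) = lp ple (bar f a)

/-- `a` s-reduces to `b` modulo `G` in one step. -/
def SigRedStep (G : Set (Fin m → MvPolynomial (Fin n) K))
    (a b : Fin m → MvPolynomial (Fin n) K) : Prop :=
  ∃ g t, RedStepWith f ple tle G a b g t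

/-- `a` regular s-reduces to `b` modulo `G` in one step. -/
def RegRedStep (G : Set (Fin m → MvPolynomial (Fin n) K))
    (a b : Fin m → MvPolynomial (Fin n) K) : Prop :=
  ∃ g t, RedStepWith f ple tle G a b g t ∧ RegularWith tle a g t

/-- `a` regular top s-reduces to `b` modulo `G` in one step. -/
def RegTopRedStep (G : Set (Fin m → MvPolynomial (Fin n) K))
    (a b : Fin m → MvPolynomial (Fin n) K) : Prop :=
  ∃ g t, RedStepWith f ple tle G a b g t ∧ RegularWith tle a g t ∧ TopWith f ple a g t

/-- `a` is regular s-irreducible modulo `G`. -/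
def RegIrred (G : Set (Fin m → MvPolynomial (Fin n) K))
    (a : Fin m → MvPolynomial (Fin n) K) : Prop :=
  ∀ b, ¬ RegRedStep f ple tle G a b

/-- `a` is regular top s-irreducible modulo `G`. -/
def RegTopIrred (G : Set (Fin m → MvPolynomial (Fin n) K))
    (a : Fin m → MvPolynomial (Fin n) K) : Prop :=
  ∀ b, ¬ RegTopRedStep f ple tle G a b

/-- `a` s-reduces to zero modulo `G`. -/
def SigRedZero (G : Set (Fin m → MvPolynomial (Fin n) K))
    (a : Fin m → MvPolynomial (Fin n) K) : Prop :=
  ∃ b, Relation.ReflTransGen (SigRedStep f ple tle G) a b ∧ bar f b = 0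

/-- `a` regular s-reduces to zero modulo `G`. -/
def RegRedZero (G : Set (Fin m → MvPolynomial (Fin n) K))
    (a : Fin m → MvPolynomial (Fin n) K) : Prop :=
  ∃ b, Relation.ReflTransGen (RegRedStep f ple tle G) a b ∧ bar f b = 0

/-- `G` is a signature Gröbner basis in the term `u`. -/
def IsSigGBIn (G : Set (Fin m → MvPolynomial (Fin n) K)) (u : Term n m) : Prop :=
  ∀ a : Fin m → MvPolynomial (Fin n) K, a ≠ 0 → sig tle a = u → SigRedZero f ple tle G a

/-- `G` is a signature Gröbner basis up to the term `u`. -/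
def IsSigGBUpto (G : Set (Fin m → MvPolynomial (Fin n) K)) (u : Term n m) : Prop :=
  ∀ v, strict tle v u → IsSigGBIn f ple tle G v

/-- `u` is a syzygy signature. -/
def IsSyzSig (u : Term n m) : Prop :=
  ∃ a : Fin m → MvPolynomial (Fin n) K, a ≠ 0 ∧ sig tle a = u ∧ bar f a = 0

/-- The sig-poly-pair `(𝔰(a), ‾a)` of a module element `a`. -/
noncomputable def sppOf (a : Fin m → MvPolynomial (Fin n) K) :
    Term n m × MvPolynomial (Fin n) K :=
  (sig tle a, bar f a)

/-- `x` is a sig-poly-pair. -/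
def IsSPP (x : Term n m × MvPolynomial (Fin n) K) : Prop :=
  ∃ a : Fin m → MvPolynomial (Fin n) K, a ≠ 0 ∧ sppOf f tle a = x

/-- `ro` is a rewrite order. -/
def IsRewriteOrder
    (ro : Term n m × MvPolynomial (Fin n) K → Term n m × MvPolynomial (Fin n) K → Prop) :
    Prop :=
  (∀ x, IsSPP f tle x → ro x x) ∧
  (∀ x y z, IsSPP f tle x → IsSPP f tle y → IsSPP f tle z → ro x y → ro y z → ro x z) ∧
  (∀ x y, IsSPP f tle x → IsSPP f tle y → (ro x y ∨ ro y x)) ∧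
  (∀ x y, IsSPP f tle x → IsSPP f tle y → ro x y → ro y x → x.1 = y.1) ∧
  (∀ (G : Set (Fin m → MvPolynomial (Fin n) K)) (a b : Fin m → MvPolynomial (Fin n) K),
    IsSigGBUpto f ple tle G (sig tle b) → a ∈ G → b ∈ G → a ≠ 0 → b ≠ 0 →
    termDvd (sig tle a) (sig tle b) → RegTopIrred f ple tle G b →
    ro (sppOf f tle a) (sppOf f tle b))

/-- `a` is a canonical rewriter in the term `u` w.r.t. `G` (for the rewrite order `ro`). -/
def IsCanonRewriter
    (ro : Term n m × MvPolynomial (Fin n) K → Term n m × MvPolynomial (Fin n) K → Prop)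
    (G : Set (Fin m → MvPolynomial (Fin n) K)) (u : Term n m)
    (a : Fin m → MvPolynomial (Fin n) K) : Prop :=
  a ∈ G ∧ a ≠ 0 ∧ termDvd (sig tle a) u ∧
    ∀ g ∈ G, g ≠ 0 → termDvd (sig tle g) u → ro (sppOf f tle g) (sppOf f tle a)

/-- `G` is a rewrite basis in the term `u` (for the rewrite order `ro`). -/
def IsRBIn
    (ro : Term n m × MvPolynomial (Fin n) K → Term n m × MvPolynomial (Fin n) K → Prop)
    (G : Set (Fin m → MvPolynomial (Fin n) K)) (u : Term n m) : Prop :=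
  IsSyzSig f tle u ∨
    ∃ g, IsCanonRewriter f tle ro G u g ∧
      RegTopIrred f ple tle G (monomMul (1 : K) (u.1 - (sig tle g).1) g)

/-- `G` is a rewrite basis up to the term `u` (for the rewrite order `ro`). -/
def IsRBUpto
    (ro : Term n m × MvPolynomial (Fin n) K → Term n m × MvPolynomial (Fin n) K → Prop)
    (G : Set (Fin m → MvPolynomial (Fin n) K)) (u : Term n m) : Prop :=
  ∀ v, strict tle v u → IsRBIn f ple tle ro G v

/-- The S-pair of two module elements. -/
noncomputable def spair (a b : Fin m → MvPolynomial (Fin n) K) :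
    Fin m → MvPolynomial (Fin n) K :=
  monomMul ((1 : K) / lc ple (bar f a))
      (lcmPP (lp ple (bar f a)) (lp ple (bar f b)) - lp ple (bar f a)) a -
    monomMul ((1 : K) / lc ple (bar f b))
      (lcmPP (lp ple (bar f a)) (lp ple (bar f b)) - lp ple (bar f b)) b

/-- `a` and `b` give rise to a regular S-pair. -/
def IsRegularSPair (a b : Fin m → MvPolynomial (Fin n) K) : Prop :=
  bar f a ≠ 0 ∧ bar f b ≠ 0 ∧
    mulTerm (lcmPP (lp ple (bar f a)) (lp ple (bar f b)) - lp ple (bar f a)) (sig tle a) ≠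
      mulTerm (lcmPP (lp ple (bar f a)) (lp ple (bar f b)) - lp ple (bar f b)) (sig tle b)

/-- `B` is a Gröbner basis of the ideal `I` w.r.t. `ple`. -/
def IsGroebnerBasis (B : Set (MvPolynomial (Fin n) K)) (I : Ideal (MvPolynomial (Fin n) K)) :
    Prop :=
  (∀ b ∈ B, b ∈ I) ∧ Ideal.span B = I ∧
    ∀ p ∈ I, p ≠ 0 → ∃ b ∈ B, b ≠ 0 ∧ ∃ t : PP n, lp ple p = t + lp ple b

/-- One step of ordinary polynomial reduction of `p` to `q` modulo `B`. -/
def PolyRedStep (B : Set (MvPolynomial (Fin n) K)) (p q : MvPolynomial (Fin n) K) : Prop :=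
  ∃ r ∈ B, r ≠ 0 ∧ ∃ t : PP n, MvPolynomial.coeff (t + lp ple r) p ≠ 0 ∧
    q = p - MvPolynomial.monomial t (MvPolynomial.coeff (t + lp ple r) p / lc ple r) * r

set_option linter.unusedSectionVars false

variable {f} {ple} {tle}

/-- A total order extending a well-quasi-order is well-founded. -/
theorem wellFounded_strict {α : Type*} [Preorder α] [WellQuasiOrderedLE α] {r : α → α → Prop}
    (hanti : ∀ x y, r x y → r y x → x = y) (htrans : ∀ x y z, r x y → r y z → r x z)
    (hext : ∀ x y, x ≤ y → r x y) : WellFounded (strict r) := by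
  have hirrefl : Std.Irrefl (strict r) := ⟨fun _ h => h.2 rfl⟩
  have hstrans : IsTrans α (strict r) := ⟨fun x y z h₁ h₂ =>
    ⟨htrans _ _ _ h₁.1 h₂.1, fun h => h₂.2 (hanti _ _ h₂.1 (h ▸ h₁.1))⟩⟩
  have : IsStrictOrder α (strict r) := {}
  rw [RelEmbedding.wellFounded_iff_isEmpty]
  refine ⟨fun e => ?_⟩
  obtain ⟨i, j, hij, hle⟩ := wellQuasiOrdered_le (fun k => e k)
  have h := e.map_rel_iff.2 (show j > i from hij)
  exact h.2 (hanti _ _ h.1 (hext _ _ hle))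

namespace OrdersOK

theorem ple_of_le (hord : OrdersOK ple tle) {s t : PP n} (h : s ≤ t) : ple s t := by
  have := hord.ple_mul s 0 (t - s) (hord.ple_one_le _)
  rwa [add_zero, add_tsub_cancel_of_le h] at this

theorem wellFounded_ple (hord : OrdersOK ple tle) : WellFounded (strict ple) :=
  wellFounded_strict hord.ple_antisymm hord.ple_trans fun _ _ => hord.ple_of_le

theorem wellFounded_tle (hord : OrdersOK ple tle) : WellFounded (strict tle) :=
  wellFounded_strict hord.tle_antisymm hord.tle_trans fun u v (h : u ≤ v) =>
    hord.tle_compat _ _ _ _ (hord.ple_of_le (Prod.le_def.1 h).1) (Prod.le_def.1 h).2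

theorem tle_strict_trans (hord : OrdersOK ple tle) {u v w : Term n m} (h₁ : tle u v)
    (h₂ : strict tle v w) : strict tle u w :=
  ⟨hord.tle_trans _ _ _ h₁ h₂.1, fun h => h₂.2 (hord.tle_antisymm _ _ h₂.1 (h ▸ h₁))⟩

theorem zero_tle (hord : OrdersOK ple tle) (u : Term n m) : tle (0, 0) u :=
  hord.tle_compat _ _ _ _ (hord.ple_one_le _) (Fin.zero_le _)

end OrdersOK

/-- A nonempty finite set has a largest element for a total preorder. -/
theorem exists_max_of_total {α : Type*} {r : α → α → Prop} (hrefl : ∀ x, r x x)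
    (htrans : ∀ x y z, r x y → r y z → r x z) (htot : ∀ x y, r x y ∨ r y x)
    {S : Set α} (hS : S.Finite) (hne : S.Nonempty) : ∃ x ∈ S, ∀ y ∈ S, r y x := by
  induction S, hS using Set.Finite.induction_on with
  | empty => exact absurd hne Set.not_nonempty_empty
  | @insert a s _ _ ih =>
    rcases s.eq_empty_or_nonempty with rfl | hs
    · exact ⟨a, by simp, by simpa using hrefl a⟩
    obtain ⟨x, hx, hmax⟩ := ih hs
    rcases htot a x with h | h
    · exact ⟨x, .inr hx, Set.forall_mem_insert.2 ⟨h, hmax⟩⟩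
    · exact ⟨a, .inl rfl, Set.forall_mem_insert.2
        ⟨hrefl a, fun y hy => htrans _ _ _ (hmax y hy) h⟩⟩

section LeadingPowerProduct

theorem lp_spec (hord : OrdersOK ple tle) {p : MvPolynomial (Fin n) K} (hp : p ≠ 0) :
    MvPolynomial.coeff (lp ple p) p ≠ 0 ∧ ∀ s, MvPolynomial.coeff s p ≠ 0 → ple s (lp ple p) := by
  have h : ∃ t, MvPolynomial.coeff t p ≠ 0 ∧ ∀ s, MvPolynomial.coeff s p ≠ 0 → ple s t := by
    obtain ⟨x, hx, hmax⟩ := exists_max_of_total hord.ple_refl hord.ple_trans hord.ple_total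
      p.support.finite_toSet (by simpa using hp)
    exact ⟨x, by simpa using hx, fun s hs => hmax s (by simpa using hs)⟩
  rw [lp, dif_pos h]
  exact h.choose_spec

theorem lp_eq (hord : OrdersOK ple tle) {p : MvPolynomial (Fin n) K} {t : PP n}
    (ht : MvPolynomial.coeff t p ≠ 0) (hmax : ∀ s, MvPolynomial.coeff s p ≠ 0 → ple s t) :
    lp ple p = t := by
  have hp : p ≠ 0 := by rintro rfl; simp at ht
  obtain ⟨h₁, h₂⟩ := lp_spec hord hp
  exact hord.ple_antisymm _ _ (hmax _ h₁) (h₂ _ ht)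

theorem lc_ne_zero (hord : OrdersOK ple tle) {p : MvPolynomial (Fin n) K} (hp : p ≠ 0) :
    lc ple p ≠ 0 := (lp_spec hord hp).1

theorem ple_of_coeff_monomial_mul_ne_zero (hord : OrdersOK ple tle) {p : MvPolynomial (Fin n) K}
    {t s : PP n} {c : K} (h : MvPolynomial.coeff s (MvPolynomial.monomial t c * p) ≠ 0) :
    ple s (t + lp ple p) := by
  rw [MvPolynomial.coeff_monomial_mul'] at h
  split_ifs at h with hts
  · have hp : p ≠ 0 := by rintro rfl; simp at h
    have := hord.ple_mul t _ _ ((lp_spec hord hp).2 _ (right_ne_zero_of_mul h))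
    rwa [add_tsub_cancel_of_le hts] at this
  · exact absurd rfl h

theorem coeff_monomial_mul_lp (p : MvPolynomial (Fin n) K) (t : PP n) (c : K) :
    MvPolynomial.coeff (t + lp ple p) (MvPolynomial.monomial t c * p) = c * lc ple p :=
  MvPolynomial.coeff_monomial_mul _ _ _ _

theorem lp_monomial_mul (hord : OrdersOK ple tle) {p : MvPolynomial (Fin n) K} (hp : p ≠ 0)
    (t : PP n) {c : K} (hc : c ≠ 0) :
    lp ple (MvPolynomial.monomial t c * p) = t + lp ple p :=
  lp_eq hord (by rw [coeff_monomial_mul_lp]; exact mul_ne_zero hc (lc_ne_zero hord hp))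
    fun _ => ple_of_coeff_monomial_mul_ne_zero hord

end LeadingPowerProduct

section Bar

theorem bar_sub (a b : Fin m → MvPolynomial (Fin n) K) : bar f (a - b) = bar f a - bar f b := by
  simp [bar, sub_mul, Finset.sum_sub_distrib]

theorem bar_monomMul (c : K) (t : PP n) (a : Fin m → MvPolynomial (Fin n) K) :
    bar f (monomMul c t a) = MvPolynomial.monomial t c * bar f a := by
  simp [bar, monomMul, Finset.mul_sum, mul_assoc]

theorem bar_zero : bar f 0 = 0 := by simp [bar]

theorem ne_zero_of_bar_ne_zero {a : Fin m → MvPolynomial (Fin n) K} (h : bar f a ≠ 0) :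
    a ≠ 0 := by
  rintro rfl
  exact h bar_zero

end Bar

section Signature

theorem coeffM_sub (a b : Fin m → MvPolynomial (Fin n) K) (u : Term n m) :
    coeffM (a - b) u = coeffM a u - coeffM b u := by
  simp [coeffM]

theorem coeffM_mulTerm (c : K) (t : PP n) (a : Fin m → MvPolynomial (Fin n) K) (u : Term n m) :
    coeffM (monomMul c t a) (mulTerm t u) = c * coeffM a u := by
  simp [coeffM, monomMul, mulTerm, MvPolynomial.coeff_monomial_mul]

theorem exists_eq_mulTerm_of_coeffM_ne_zero {c : K} {t : PP n}
    {a : Fin m → MvPolynomial (Fin n) K} {u : Term n m} (h : coeffM (monomMul c t a) u ≠ 0) :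
    ∃ v, u = mulTerm t v ∧ coeffM a v ≠ 0 := by
  unfold coeffM monomMul at h
  rw [MvPolynomial.coeff_monomial_mul'] at h
  split_ifs at h with htu
  · refine ⟨(u.1 - t, u.2), ?_, right_ne_zero_of_mul h⟩
    simp [mulTerm, add_tsub_cancel_of_le htu]
  · exact absurd rfl h

theorem exists_max_term (hord : OrdersOK ple tle) {a : Fin m → MvPolynomial (Fin n) K}
    (ha : a ≠ 0) : ∃ u, coeffM a u ≠ 0 ∧ ∀ v, coeffM a v ≠ 0 → tle v u := by
  have hfin : {u : Term n m | coeffM a u ≠ 0}.Finite := by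
    refine (Set.finite_iUnion fun i : Fin m =>
      ((a i).support.finite_toSet.image fun s => (s, i))).subset fun u hu => ?_
    exact Set.mem_iUnion.2 ⟨u.2, u.1, by simpa [coeffM] using hu, rfl⟩
  refine exists_max_of_total hord.tle_refl hord.tle_trans hord.tle_total hfin ?_
  by_contra hempty
  refine ha (funext fun i => MvPolynomial.ext _ _ fun s => ?_)
  by_contra hs
  exact hempty ⟨(s, i), hs⟩

theorem sig_spec (hord : OrdersOK ple tle) {a : Fin m → MvPolynomial (Fin n) K} (ha : a ≠ 0) :
    coeffM a (sig tle a) ≠ 0 ∧ ∀ v, coeffM a v ≠ 0 → tle v (sig tle a) := by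
  have h := exists_max_term hord ha
  rw [sig, dif_pos h]
  exact h.choose_spec

theorem tle_sig (hord : OrdersOK ple tle) {a : Fin m → MvPolynomial (Fin n) K} {v : Term n m}
    (hv : coeffM a v ≠ 0) : tle v (sig tle a) :=
  (sig_spec hord (by rintro rfl; simp [coeffM] at hv)).2 v hv

theorem sig_tle (hord : OrdersOK ple tle) {a : Fin m → MvPolynomial (Fin n) K} {u : Term n m}
    (h : ∀ v, coeffM a v ≠ 0 → tle v u) : tle (sig tle a) u := by
  by_cases ha : a = 0
  · subst ha
    simpa [sig, coeffM] using hord.zero_tle u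
  · exact h _ (sig_spec hord ha).1

theorem sig_eq (hord : OrdersOK ple tle) {a : Fin m → MvPolynomial (Fin n) K} {u : Term n m}
    (hu : coeffM a u ≠ 0) (h : ∀ v, coeffM a v ≠ 0 → tle v u) : sig tle a = u :=
  hord.tle_antisymm _ _ (sig_tle hord h) (tle_sig hord hu)

theorem tle_of_coeffM_monomMul_ne_zero (hord : OrdersOK ple tle)
    {a : Fin m → MvPolynomial (Fin n) K} {c : K} {t : PP n} {u : Term n m}
    (h : coeffM (monomMul c t a) u ≠ 0) : tle u (mulTerm t (sig tle a)) := by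
  obtain ⟨v, rfl, hv⟩ := exists_eq_mulTerm_of_coeffM_ne_zero h
  exact hord.tle_mul _ _ _ (tle_sig hord hv)

theorem coeffM_monomMul_sig_ne_zero (hord : OrdersOK ple tle)
    {a : Fin m → MvPolynomial (Fin n) K} (ha : a ≠ 0) {c : K} (hc : c ≠ 0) (t : PP n) :
    coeffM (monomMul c t a) (mulTerm t (sig tle a)) ≠ 0 := by
  rw [coeffM_mulTerm]
  exact mul_ne_zero hc (sig_spec hord ha).1

theorem sig_monomMul (hord : OrdersOK ple tle) {a : Fin m → MvPolynomial (Fin n) K} (ha : a ≠ 0)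
    {c : K} (hc : c ≠ 0) (t : PP n) :
    sig tle (monomMul c t a) = mulTerm t (sig tle a) :=
  sig_eq hord (coeffM_monomMul_sig_ne_zero hord ha hc t)
    fun _ => tle_of_coeffM_monomMul_ne_zero hord

theorem coeffM_sub_tle {a b : Fin m → MvPolynomial (Fin n) K}
    {u : Term n m} (ha : ∀ v, coeffM a v ≠ 0 → tle v u) (hb : ∀ v, coeffM b v ≠ 0 → tle v u)
    (v : Term n m) (hv : coeffM (a - b) v ≠ 0) : tle v u := by
  by_cases h : coeffM a v = 0
  · refine hb v fun h' => hv ?_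
    rw [coeffM_sub, h, h', sub_zero]
  · exact ha v h

theorem sig_sub_monomMul_tle (hord : OrdersOK ple tle) {a g : Fin m → MvPolynomial (Fin n) K}
    {t : PP n} (c : K) (h : tle (mulTerm t (sig tle g)) (sig tle a)) :
    tle (sig tle (a - monomMul c t g)) (sig tle a) :=
  sig_tle hord <| coeffM_sub_tle (fun _ => tle_sig hord) fun _ hv =>
    hord.tle_trans _ _ _ (tle_of_coeffM_monomMul_ne_zero hord hv) h

theorem coeffM_sub_monomMul_sig_ne_zero (hord : OrdersOK ple tle)
    {a g : Fin m → MvPolynomial (Fin n) K} (ha : a ≠ 0) {t : PP n} (c : K)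
    (h : strict tle (mulTerm t (sig tle g)) (sig tle a)) :
    coeffM (a - monomMul c t g) (sig tle a) ≠ 0 := by
  have h0 : coeffM (monomMul c t g) (sig tle a) = 0 := by
    by_contra hne
    exact h.2 (hord.tle_antisymm _ _ h.1 (tle_of_coeffM_monomMul_ne_zero hord hne))
  rw [coeffM_sub, h0, sub_zero]
  exact (sig_spec hord ha).1

theorem sig_sub_monomMul (hord : OrdersOK ple tle) {a g : Fin m → MvPolynomial (Fin n) K}
    (ha : a ≠ 0) {t : PP n} (c : K) (h : strict tle (mulTerm t (sig tle g)) (sig tle a)) :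
    sig tle (a - monomMul c t g) = sig tle a :=
  hord.tle_antisymm _ _ (sig_sub_monomMul_tle hord c h.1)
    (tle_sig hord (coeffM_sub_monomMul_sig_ne_zero hord ha c h))

theorem sub_monomMul_ne_zero (hord : OrdersOK ple tle) {a g : Fin m → MvPolynomial (Fin n) K}
    (ha : a ≠ 0) {t : PP n} (c : K) (h : strict tle (mulTerm t (sig tle g)) (sig tle a)) :
    a - monomMul c t g ≠ 0 := fun h0 =>
  coeffM_sub_monomMul_sig_ne_zero hord ha c h (by rw [h0]; simp [coeffM])

/-- Cancelling the leading term of a module element lowers its signature. -/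
theorem exists_sub_monomMul_strict (hord : OrdersOK ple tle)
    {a g : Fin m → MvPolynomial (Fin n) K} (ha : a ≠ 0) (hg : g ≠ 0) {t : PP n}
    (h : mulTerm t (sig tle g) = sig tle a) :
    ∃ c : K, c ≠ 0 ∧ (a - monomMul c t g = 0 ∨
      strict tle (sig tle (a - monomMul c t g)) (sig tle a)) := by
  have hga := (sig_spec hord hg).1
  have haa := (sig_spec hord ha).1
  refine ⟨coeffM a (sig tle a) / coeffM g (sig tle g), div_ne_zero haa hga, ?_⟩
  refine or_iff_not_imp_left.2 fun hne => ⟨sig_sub_monomMul_tle hord _ (h ▸ hord.tle_refl _), ?_⟩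
  intro heq
  apply (sig_spec hord hne).1
  rw [heq, coeffM_sub]
  nth_rewrite 3 [← h]
  rw [coeffM_mulTerm, div_mul_cancel₀ _ hga, sub_self]

end Signature

section Reduction

variable {G : Set (Fin m → MvPolynomial (Fin n) K)}

theorem SigRedZero.of_bar_eq_zero {a : Fin m → MvPolynomial (Fin n) K} (h : bar f a = 0) :
    SigRedZero f ple tle G a := ⟨a, .refl, h⟩

theorem SigRedZero.head {a b : Fin m → MvPolynomial (Fin n) K} (hab : SigRedStep f ple tle G a b)
    (hb : SigRedZero f ple tle G b) : SigRedZero f ple tle G a := by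
  obtain ⟨c, hbc, hc⟩ := hb
  exact ⟨c, .head hab hbc, hc⟩

/-- s-reducibility to zero transfers to elements with the same image and larger signature. -/
theorem SigRedZero.of_bar_eq (hord : OrdersOK ple tle) {a d : Fin m → MvPolynomial (Fin n) K}
    (hd : SigRedZero f ple tle G d) (ha : a ≠ 0) (hbar : bar f a = bar f d)
    (hsig : strict tle (sig tle d) (sig tle a)) : SigRedZero f ple tle G a := by
  obtain ⟨z, hdz, hz⟩ := hd
  induction hdz using Relation.ReflTransGen.head_induction_on generalizing a with
  | refl => exact .of_bar_eq_zero (hbar.trans hz)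
  | head hstep _ ih =>
    obtain ⟨g, t, hgG, hg, hcoeff, rfl, hle⟩ := hstep
    rw [← hbar] at hcoeff ih
    have hreg := hord.tle_strict_trans hle hsig
    refine .head ⟨g, t, hgG, hg, hcoeff, rfl, hreg.1⟩
      (ih (sub_monomMul_ne_zero hord ha _ hreg) ?_ ?_)
    · rw [bar_sub, bar_sub, hbar]
    · rw [sig_sub_monomMul hord ha _ hreg]
      exact hord.tle_strict_trans (sig_sub_monomMul_tle hord _ hle) hsig

theorem ple_lp_of_coeff_sub_ne_zero (hord : OrdersOK ple tle) {p q : MvPolynomial (Fin n) K}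
    (hp : p ≠ 0) {c : K} {t : PP n} {w : PP n} (hpw : ple (lp ple p) w)
    (hqw : ple (t + lp ple q) w) (s : PP n)
    (hs : MvPolynomial.coeff s (p - MvPolynomial.monomial t c * q) ≠ 0) : ple s w := by
  by_cases h : MvPolynomial.coeff s p = 0
  · rw [MvPolynomial.coeff_sub, h, zero_sub, neg_ne_zero] at hs
    exact hord.ple_trans _ _ _ (ple_of_coeff_monomial_mul_ne_zero hord hs) hqw
  · exact hord.ple_trans _ _ _ ((lp_spec hord hp).2 _ h) hpw

theorem coeff_monomial_mul_eq_zero_of_strict (hord : OrdersOK ple tle)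
    {q : MvPolynomial (Fin n) K} {c : K} {t w : PP n} (h : strict ple (t + lp ple q) w) :
    MvPolynomial.coeff w (MvPolynomial.monomial t c * q) = 0 := by
  by_contra hne
  exact h.2 (hord.ple_antisymm _ _ h.1 (ple_of_coeff_monomial_mul_ne_zero hord hne))

/-- An element with nonzero image that s-reduces to zero is top s-reducible. -/
theorem SigRedZero.exists_top (hord : OrdersOK ple tle) {d : Fin m → MvPolynomial (Fin n) K}
    (hd : SigRedZero f ple tle G d) (hbar : bar f d ≠ 0) :
    ∃ g ∈ G, ∃ t, bar f g ≠ 0 ∧ t + lp ple (bar f g) = lp ple (bar f d) ∧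
      tle (mulTerm t (sig tle g)) (sig tle d) := by
  obtain ⟨z, hdz, hz⟩ := hd
  induction hdz using Relation.ReflTransGen.head_induction_on with
  | refl => exact absurd hz hbar
  | @head d _ hstep _ ih =>
    obtain ⟨g, t, hgG, hg, hcoeff, rfl, hle⟩ := hstep
    by_cases htop : t + lp ple (bar f g) = lp ple (bar f d)
    · exact ⟨g, hgG, t, hg, htop, hle⟩
    have hlt : strict ple (t + lp ple (bar f g)) (lp ple (bar f d)) :=
      ⟨(lp_spec hord hbar).2 _ hcoeff, htop⟩
    rw [bar_sub, bar_monomMul] at ih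
    set p := bar f d - MvPolynomial.monomial t (MvPolynomial.coeff (t + lp ple (bar f g)) (bar f d) /
      lc ple (bar f g)) * bar f g with hp
    have hpc : MvPolynomial.coeff (lp ple (bar f d)) p ≠ 0 := by
      rw [hp, MvPolynomial.coeff_sub, coeff_monomial_mul_eq_zero_of_strict hord hlt, sub_zero]
      exact (lp_spec hord hbar).1
    have hlp : lp ple p = lp ple (bar f d) :=
      lp_eq hord hpc (ple_lp_of_coeff_sub_ne_zero hord hbar (hord.ple_refl _) hlt.1)
    obtain ⟨g', hg', t', hbar', htop', hle'⟩ := ih (by rintro h0; simp [h0] at hpc)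
    exact ⟨g', hg', t', hbar', htop'.trans hlp,
      hord.tle_trans _ _ _ hle' (sig_sub_monomMul_tle hord _ hle)⟩

/-- A top s-reduction step lowers the leading power-product. -/
theorem lp_strict_of_top (hord : OrdersOK ple tle) {a b g : Fin m → MvPolynomial (Fin n) K}
    {t : PP n} (hstep : RedStepWith f ple tle G a b g t) (htop : TopWith f ple a g t)
    (ha : bar f a ≠ 0) (hb : bar f b ≠ 0) :
    strict ple (lp ple (bar f b)) (lp ple (bar f a)) := by
  obtain ⟨-, hg, -, rfl, -⟩ := hstep
  rw [TopWith] at htop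
  rw [bar_sub, bar_monomMul] at hb ⊢
  refine ⟨ple_lp_of_coeff_sub_ne_zero hord ha (hord.ple_refl _) (htop ▸ hord.ple_refl _) _
    (lp_spec hord hb).1, fun heq => (lp_spec hord hb).1 ?_⟩
  rw [heq, ← htop, MvPolynomial.coeff_sub, coeff_monomial_mul_lp,
    div_mul_cancel₀ _ (lc_ne_zero hord hg), sub_self]

/-- A regular top s-irreducible element admits no regular top reducer. -/
theorem RegTopIrred.not_top (hord : OrdersOK ple tle) {a g : Fin m → MvPolynomial (Fin n) K}
    (hirr : RegTopIrred f ple tle G a) (ha : bar f a ≠ 0) (hgG : g ∈ G) (hg : bar f g ≠ 0)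
    {t : PP n} (htop : t + lp ple (bar f g) = lp ple (bar f a))
    (hreg : strict tle (mulTerm t (sig tle g)) (sig tle a)) : False :=
  hirr _ ⟨g, t, ⟨hgG, hg, htop ▸ (lp_spec hord ha).1, rfl, hreg.1⟩, hreg, htop⟩

/-- If `a` and `t·g` are regular top s-irreducible of the same signature and `a - c·t·g`, of
smaller signature, s-reduces to zero, then `a` s-reduces to `a - c·t·g` in one step. -/
theorem sigRedStep_sub (hord : OrdersOK ple tle) {a g : Fin m → MvPolynomial (Fin n) K}
    {t : PP n} {c : K} (hc : c ≠ 0) (ha : bar f a ≠ 0) (hgG : g ∈ G) (hg : bar f g ≠ 0)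
    (hsig : mulTerm t (sig tle g) = sig tle a) (hirra : RegTopIrred f ple tle G a)
    (hirrg : RegTopIrred f ple tle G (monomMul (1 : K) t g))
    (hd : a - monomMul c t g = 0 ∨ strict tle (sig tle (a - monomMul c t g)) (sig tle a))
    (hred : SigRedZero f ple tle G (a - monomMul c t g)) :
    SigRedStep f ple tle G a (a - monomMul c t g) := by
  have hsigg : sig tle (monomMul (1 : K) t g) = sig tle a := by
    rw [sig_monomMul hord (ne_zero_of_bar_ne_zero hg) one_ne_zero, hsig]
  have hbarg : bar f (monomMul (1 : K) t g) ≠ 0 := by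
    rw [bar_monomMul]
    exact mul_ne_zero (by simp) hg
  have hlpg : lp ple (bar f (monomMul (1 : K) t g)) = t + lp ple (bar f g) := by
    rw [bar_monomMul, lp_monomial_mul hord hg t one_ne_zero]
  have hbard : bar f (a - monomMul c t g) = bar f a - MvPolynomial.monomial t c * bar f g := by
    rw [bar_sub, bar_monomMul]
  have hne : bar f (a - monomMul c t g) ≠ 0 →
      lp ple (bar f (a - monomMul c t g)) ≠ lp ple (bar f a) ∧
      lp ple (bar f (a - monomMul c t g)) ≠ t + lp ple (bar f g) := by
    intro h0
    have hlt := hd.resolve_left (ne_zero_of_bar_ne_zero h0)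
    obtain ⟨h, hG, s, hh, htop, hle⟩ := hred.exists_top hord h0
    have hreg := hord.tle_strict_trans hle hlt
    refine ⟨fun heq => hirra.not_top hord ha hG hh (htop.trans heq) hreg, fun heq => ?_⟩
    exact hirrg.not_top hord hbarg hG hh (htop.trans (heq.trans hlpg.symm)) (hsigg ▸ hreg)
  have hzero : ∀ w, (w = lp ple (bar f a) ∨ w = t + lp ple (bar f g)) → ple (lp ple (bar f a)) w →
      ple (t + lp ple (bar f g)) w → MvPolynomial.coeff w (bar f (a - monomMul c t g)) = 0 := by
    intro w hw h₁ h₂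
    by_contra h0
    have hlp : lp ple (bar f (a - monomMul c t g)) = w := by
      refine lp_eq hord h0 fun s hs => ?_
      rw [hbard] at hs
      exact ple_lp_of_coeff_sub_ne_zero hord ha h₁ h₂ s hs
    obtain ⟨h₃, h₄⟩ := hne (by rintro h; simp [h] at h0)
    rcases hw with rfl | rfl
    · exact h₃ hlp
    · exact h₄ hlp
  have heq : t + lp ple (bar f g) = lp ple (bar f a) := by
    by_contra hneq
    rcases hord.ple_total (lp ple (bar f a)) (t + lp ple (bar f g)) with h | h
    · have h0 := hzero _ (.inr rfl) h (hord.ple_refl _)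
      rw [hbard, MvPolynomial.coeff_sub, coeff_monomial_mul_lp] at h0
      have ha0 : MvPolynomial.coeff (t + lp ple (bar f g)) (bar f a) = 0 := by
        by_contra hcoeff
        exact hneq (hord.ple_antisymm _ _ ((lp_spec hord ha).2 _ hcoeff) h)
      rw [ha0, zero_sub, neg_eq_zero] at h0
      exact mul_ne_zero hc (lc_ne_zero hord hg) h0
    · have h0 := hzero _ (.inl rfl) (hord.ple_refl _) h
      rw [hbard, MvPolynomial.coeff_sub, coeff_monomial_mul_eq_zero_of_strict hord ⟨h, hneq⟩,
        sub_zero] at h0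
      exact (lp_spec hord ha).1 h0
  have hcoeff : MvPolynomial.coeff (t + lp ple (bar f g)) (bar f a) = c * lc ple (bar f g) := by
    have h0 := hzero _ (.inr rfl) (heq ▸ hord.ple_refl _) (hord.ple_refl _)
    rwa [hbard, MvPolynomial.coeff_sub, coeff_monomial_mul_lp, sub_eq_zero] at h0
  refine ⟨g, t, hgG, hg, heq ▸ (lp_spec hord ha).1, ?_, hsig ▸ hord.tle_refl _⟩
  rw [hcoeff, mul_div_cancel_right₀ _ (lc_ne_zero hord hg)]

theorem isSigGBIn_of_isSyzSig (hord : OrdersOK ple tle) {v : Term n m}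
    (hGB : IsSigGBUpto f ple tle G v) (hsyz : IsSyzSig f tle v) : IsSigGBIn f ple tle G v := by
  rintro a ha rfl
  obtain ⟨z, hz, hsig, hbar⟩ := hsyz
  obtain ⟨c, -, h⟩ := exists_sub_monomMul_strict (t := 0) hord ha hz (by simpa [mulTerm] using hsig)
  have hbard : bar f a = bar f (a - monomMul c 0 z) := by
    rw [bar_sub, bar_monomMul, hbar, mul_zero, sub_zero]
  by_cases h0 : a - monomMul c 0 z = 0
  · exact .of_bar_eq_zero (by rw [hbard, h0, bar_zero])
  · have hlt := h.resolve_left h0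
    exact (hGB _ hlt _ h0 rfl).of_bar_eq hord ha hbard hlt

theorem isSigGBIn_of_regTopIrred (hord : OrdersOK ple tle) {v : Term n m}
    (hGB : IsSigGBUpto f ple tle G v) (hsyz : ¬ IsSyzSig f tle v)
    {g : Fin m → MvPolynomial (Fin n) K} (hgG : g ∈ G) (hg0 : g ≠ 0) {t : PP n}
    (hv : v = mulTerm t (sig tle g)) (hirr : RegTopIrred f ple tle G (monomMul (1 : K) t g)) :
    IsSigGBIn f ple tle G v := by
  have hg : bar f g ≠ 0 := fun h => by
    have hc := coeffM_monomMul_sig_ne_zero hord hg0 (one_ne_zero (α := K)) t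
    refine hsyz ⟨monomMul (1 : K) t g, fun h' => hc (by simp [h', coeffM]), ?_, ?_⟩
    · rw [sig_monomMul hord hg0 one_ne_zero, hv]
    · rw [bar_monomMul, h, mul_zero]
  intro a ha hsiga
  induction hw : lp ple (bar f a) using hord.wellFounded_ple.induction generalizing a with
  | _ w ih =>
  subst hw
  have hbara : bar f a ≠ 0 := fun h => hsyz ⟨a, ha, hsiga, h⟩
  by_cases hirra : RegTopIrred f ple tle G a
  · have hsig : mulTerm t (sig tle g) = sig tle a := by rw [hsiga, hv]
    obtain ⟨c, hc, h⟩ := exists_sub_monomMul_strict hord ha hg0 hsig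
    have hred : SigRedZero f ple tle G (a - monomMul c t g) := by
      by_cases h0 : a - monomMul c t g = 0
      · exact .of_bar_eq_zero (by rw [h0, bar_zero])
      · exact hGB _ (hsiga ▸ h.resolve_left h0) _ h0 rfl
    exact .head (sigRedStep_sub hord hc hbara hgG hg hsig hirra hirr h hred) hred
  · obtain ⟨b, h, s, hstep, hreg, htop⟩ : ∃ b, RegTopRedStep f ple tle G a b := by
      simpa [RegTopIrred] using hirra
    have hb := hstep.2.2.2.1
    have hb0 : b ≠ 0 := hb ▸ sub_monomMul_ne_zero hord ha _ hreg
    have hsigb : sig tle b = v := by rw [hb, sig_sub_monomMul hord ha _ hreg, hsiga]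
    have hbarb : bar f b ≠ 0 := fun h => hsyz ⟨b, hb0, hsigb, h⟩
    exact .head ⟨h, s, hstep⟩ (ih _ (lp_strict_of_top hord hstep htop hbara hbarb) b hb0 hsigb rfl)

end Reduction

variable (f) (ple) (tle)

/-- a rewrite basis up to `u` is a signature Gröbner basis up to `u`. -/
theorem rb_imp_sigGB (hord : OrdersOK ple tle)
    (ro : Term n m × MvPolynomial (Fin n) K → Term n m × MvPolynomial (Fin n) K → Prop)
    (hro : IsRewriteOrder f ple tle ro)
    (G : Set (Fin m → MvPolynomial (Fin n) K)) (u : Term n m)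
    (hRB : IsRBUpto f ple tle ro G u) :
    IsSigGBUpto f ple tle G u := by
  intro v
  induction v using hord.wellFounded_tle.induction with
  | _ v ih =>
  intro hv
  have hGB : IsSigGBUpto f ple tle G v := fun w hw =>
    ih w hw (hord.tle_strict_trans hw.1 hv)
  by_cases hsyz : IsSyzSig f tle v
  · exact isSigGBIn_of_isSyzSig hord hGB hsyz
  · obtain ⟨g, ⟨hgG, hg0, ⟨t, ht⟩, -⟩, hirr⟩ := (hRB v hv).resolve_left hsyz
    have hquot : v.1 - (sig tle g).1 = t := by simp [ht, mulTerm]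
    exact isSigGBIn_of_regTopIrred hord hGB hsyz hgG hg0 ht (hquot ▸ hirr)

end

end SigGB
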